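/- For every third-order tensor A ∈ ℝ^{n1×n2×n3}, the block matrix mat(A) is block-diagonalized by the DCT: (C_{n3} ⊗ I_{n1}) · mat(A) · (C_{n3}ᵀ ⊗ I_{n2}) equals the block-diagonal matrix blockdiag(Ã^{(1)}, …, Ã^{(n3)}) whose p-th diagonal block is the p-th transformed slice Ã^{(p)} of A; here ⊗ denotes the Kronecker product. -/

import Mathlib

open Matrix BigOperators Kronecker

noncomputable section

/-- The `n × n` discrete cosine transform (DCT) matrix, with 0-based indexing of the 1-based
formula `(C_n)_{ij} = √((2−δ_{i1})/n)·cos((i−1)(2j−1)π/(2n))`. -/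
def dctMatrix (n : ℕ) : Matrix (Fin n) (Fin n) ℝ :=
  Matrix.of fun i j =>
    Real.sqrt ((2 - if (i : ℕ) = 0 then 1 else 0) / n) *
      Real.cos ((i : ℝ) * (2 * (j : ℝ) + 1) * Real.pi / (2 * n))

/-- The `n × n` upshift matrix `Z`, with ones on the first superdiagonal. -/
def upshift (n : ℕ) : Matrix (Fin n) (Fin n) ℝ :=
  Matrix.of fun i j => if (i : ℕ) + 1 = (j : ℕ) then 1 else 0

/-- `W = diag(C_n(:,1))`, the diagonal matrix whose diagonal is the first column of the DCT
matrix. -/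
def Wdiag (n : ℕ) : Matrix (Fin n) (Fin n) ℝ :=
  Matrix.diagonal fun i => dctMatrix n i ⟨0, i.pos⟩

/-- The `n × n` transform matrix `M = W⁻¹ C_n (I + Z)`. -/
def transformM (n : ℕ) : Matrix (Fin n) (Fin n) ℝ :=
  (Wdiag n)⁻¹ * dctMatrix n * (1 + upshift n)

/-- The Hankel part `H_{p,q}` of the `(p,q)` block of `mat(A)` (0-based indices:
the 1-based conditions `p+q ≤ n3`, `p+q = n3+1`, `p+q ≥ n3+2` become
`p+q+1 < n3`, `p+q+1 = n3` and `p+q+1 > n3`, with blocks `A^{(p+q+1)}` resp. `0`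
resp. `A^{(2·n3−(p+q)−1)}` in 0-based numbering of the slices). -/
def hankelPart {n1 n2 n3 : ℕ} (A : Fin n3 → Matrix (Fin n1) (Fin n2) ℝ) (p q : Fin n3) :
    Matrix (Fin n1) (Fin n2) ℝ :=
  if h : p.val + q.val + 1 < n3 then A ⟨p.val + q.val + 1, h⟩
  else if h' : p.val + q.val + 1 = n3 then 0
  else A ⟨2 * n3 - (p.val + q.val) - 1, by
    have hp := p.isLt; have hq := q.isLt; omega⟩

/-- `mat(A)`: the block Toeplitz-plus-Hankel matrix associated with a third-order tensor `A`,
identified with the tuple of its frontal slices.  Rows are indexed by `Fin n3 × Fin n1`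
(block row, row within block) and columns by `Fin n3 × Fin n2`. -/
def tmat {n1 n2 n3 : ℕ} (A : Fin n3 → Matrix (Fin n1) (Fin n2) ℝ) :
    Matrix (Fin n3 × Fin n1) (Fin n3 × Fin n2) ℝ :=
  Matrix.of fun pi qj =>
    (A ⟨Nat.dist pi.1.val qj.1.val, by
        have hp := pi.1.isLt; have hq := qj.1.isLt
        simp only [Nat.dist]; omega⟩ + hankelPart A pi.1 qj.1) pi.2 qj.2

/-- The `p`-th transformed slice `Ã^{(p)} = Σ_q M_{pq} A^{(q)}` of a tensor `A`. -/
def tSlice {n1 n2 n3 : ℕ} (A : Fin n3 → Matrix (Fin n1) (Fin n2) ℝ) (p : Fin n3) :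
    Matrix (Fin n1) (Fin n2) ℝ :=
  ∑ q, transformM n3 p q • A q

/-- Toeplitz-plus-Hankel matrix `th(v)` of a vector `v ∈ ℝⁿ` (0-based indexing of the 1-based
formula of the paper). -/
def thMat {n : ℕ} (v : Fin n → ℝ) : Matrix (Fin n) (Fin n) ℝ :=
  Matrix.of fun p q =>
    v ⟨Nat.dist p.val q.val, by
        have hp := p.isLt; have hq := q.isLt; simp only [Nat.dist]; omega⟩ +
    (if h : p.val + q.val + 1 < n then v ⟨p.val + q.val + 1, h⟩
     else if h' : p.val + q.val + 1 = n then 0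
     else v ⟨2 * n - (p.val + q.val) - 1, by
       have hp := p.isLt; have hq := q.isLt; omega⟩)

/-- The product `a ⊛ B` of a tube `a ∈ ℝ^{1×1×n3}` (identified with a vector of `ℝ^{n3}`) with a
tensor `B`: the tensor whose transformed slices are `(a ⊛ B)~^{(p)} = (M a)_p • B̃^{(p)}`. -/
def tubeSMul {n1 n2 n3 : ℕ} (a : Fin n3 → ℝ) (B : Fin n3 → Matrix (Fin n1) (Fin n2) ℝ) :
    Fin n3 → Matrix (Fin n1) (Fin n2) ℝ :=
  fun t => ∑ p, (transformM n3)⁻¹ t p • ((transformM n3).mulVec a p • tSlice B p)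

/-- The c-product `a ⋆_c b` of two tubes: the tube whose transform is the componentwise product
of the transforms, `M (a ⋆_c b) = (M a) .* (M b)`. -/
def tubeCMul {n3 : ℕ} (a b : Fin n3 → ℝ) : Fin n3 → ℝ :=
  (transformM n3)⁻¹.mulVec fun p => (transformM n3).mulVec a p * (transformM n3).mulVec b p

/-- Frobenius norm of a real matrix. -/
def frobNorm {m n : ℕ} (B : Matrix (Fin m) (Fin n) ℝ) : ℝ :=
  Real.sqrt (∑ i, ∑ j, (B i j) ^ 2)

/-- Frobenius norm of a third-order tensor. -/
def tFrobNorm {n1 n2 n3 : ℕ} (A : Fin n3 → Matrix (Fin n1) (Fin n2) ℝ) : ℝ :=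
  Real.sqrt (∑ k, ∑ i, ∑ j, (A k i j) ^ 2)

/-- The `i`-th lateral slice `U(:,i,:)` of a tensor `U`: the `n1 × 1 × n3` tensor whose `k`-th
frontal slice is the `i`-th column of `U^{(k)}`. -/
def lateralSlice {n1 n2 n3 : ℕ} (U : Fin n3 → Matrix (Fin n1) (Fin n2) ℝ) (i : Fin n2) :
    Fin n3 → Matrix (Fin n1) (Fin 1) ℝ :=
  fun k => Matrix.of fun r _ => U k r i

/-- The `(i,j)` tube `S(i,j,:)` of a tensor `S`: the `1 × 1 × n3` tensor whose `k`-th frontal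
slice is the `(i,j)` entry of `S^{(k)}`. -/
def entryTube {n1 n2 n3 : ℕ} (S : Fin n3 → Matrix (Fin n1) (Fin n2) ℝ) (i : Fin n1) (j : Fin n2) :
    Fin n3 → Matrix (Fin 1) (Fin 1) ℝ :=
  fun k => Matrix.of fun _ _ => S k i j

/-- Slicewise transpose of a tensor. -/
def sTranspose {n1 n2 n3 : ℕ} (A : Fin n3 → Matrix (Fin n1) (Fin n2) ℝ) :
    Fin n3 → Matrix (Fin n2) (Fin n1) ℝ :=
  fun k => (A k)ᵀ

/-- `TVect(A)`: stacking the lateral slices of `A` one below the other; the `k`-th frontal slice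
of `TVect(A)` is obtained by stacking the columns of `A^{(k)}` (entry `r = j·n1 + i` is
`A^{(k)}_{i,j}`). -/
def tvect {n1 n2 n3 : ℕ} (A : Fin n3 → Matrix (Fin n1) (Fin n2) ℝ) :
    Fin n3 → Matrix (Fin (n1 * n2)) (Fin 1) ℝ :=
  fun k => Matrix.of fun r _ =>
    A k ⟨r.val % n1, Nat.mod_lt _ (Nat.pos_of_ne_zero fun h0 => absurd r.isLt (by simp [h0]))⟩
        ⟨r.val / n1, Nat.div_lt_of_lt_mul r.isLt⟩

/-! Continue `v` to an even `2n`-periodic function `V` on `ℤ` with `V n = 0`. Then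
`th(v) p q = V (p - q) + V (p + q + 1)`, so on a `2n`-periodic `f` with `f (-1 - x) = f x` the
matrix `th(v)` acts as circular convolution with `V`: the Hankel part supplies the half of the
period that the reflection `x ↦ -1 - x` maps onto `0, …, n - 1`. The `j`-th row of the DCT matrix
continues to such an `f`, and `f (x - k) + f (x + k) = 2 cos (j k π / n) f x` makes it an
eigenvector of `th(v)` with eigenvalue `(M v) j`. Since the DCT matrix is orthogonal, it
diagonalizes `th(v)`, and `mat(A)` is a matrix `th(v)` in each entry `(a, b)` of its blocks. -/

section Periodic

open Finset

variable {M : Type*} [AddCommMonoid M] {g : ℤ → M}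

lemma sum_range_add_of_periodic {N : ℕ} (hg : Function.Periodic g N) (a : ℤ) :
    ∑ i ∈ range N, g (a + i) = ∑ i ∈ range N, g i := by
  have shift_one (b : ℤ) : ∑ i ∈ range N, g (b + 1 + i) = ∑ i ∈ range N, g (b + i) := by
    cases N with
    | zero => simp
    | succ m =>
      rw [sum_range_succ, sum_range_succ' _ m, Nat.cast_zero, add_zero, ← hg b]
      push_cast
      simp only [add_assoc, add_comm (1 : ℤ)]
  induction a with
  | zero => simp
  | succ b ih => rw [shift_one, ih]
  | pred b ih => rw [← ih, ← shift_one, sub_add_cancel]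

lemma sum_range_sub_of_periodic {N : ℕ} (hg : Function.Periodic g N) (a : ℤ) :
    ∑ i ∈ range N, g (a - i) = ∑ i ∈ range N, g i := by
  rw [← sum_range_add_of_periodic hg (a - N + 1), ← sum_range_reflect]
  refine sum_congr rfl fun i hi => congrArg g ?_
  have := mem_range.1 hi
  omega

lemma sum_range_two_mul_of_periodic {n : ℕ} (hg : Function.Periodic g (2 * n : ℕ)) :
    ∑ x ∈ range (2 * n), g x = ∑ q ∈ range n, (g q + g (-1 - q)) := by
  rw [two_mul, sum_range_add, sum_add_distrib, ← sum_range_reflect (fun x => g ((n + x : ℕ) : ℤ))]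
  congr 1
  refine sum_congr rfl fun q hq => ?_
  have := mem_range.1 hq
  rw [← hg (-1 - q)]
  congr 1
  omega

lemma add_sum_range_two_mul_of_periodic {n : ℕ} (hg : Function.Periodic g (2 * n : ℕ)) :
    g 0 + ∑ x ∈ range (2 * n), g x = ∑ k ∈ range n, (g k + g (-k)) + g n := by
  have reflected : g 0 + ∑ q ∈ range n, g (-1 - q) = ∑ k ∈ range n, g (-k) + g n := by
    have h := (sum_range_succ' (fun k : ℕ => g (-k)) n).symm.trans (sum_range_succ _ n)
    have antipode : g (-n) = g n := by
      rw [← hg (-n)]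
      congr 1
      omega
    rw [antipode, Nat.cast_zero, neg_zero, add_comm] at h
    simpa [neg_add, sub_eq_add_neg, add_comm (-1 : ℤ)] using h
  rw [sum_range_two_mul_of_periodic hg, sum_add_distrib, sum_add_distrib, add_left_comm, reflected,
    add_assoc]

end Periodic

section EvenPeriodicExtension

variable {R : Type*} [Zero R] {n : ℕ} (v : Fin n → R)

/-- The even `2n`-periodic extension of `v 0, …, v (n - 1)` to `ℤ`, with value `0` at `n`. The
absolute value of `ZMod.valMinAbs` is the distance from `x` to the nearest multiple of `2n`. -/
def evenPeriodicExt (x : ℤ) : R :=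
  if h : (x : ZMod (2 * n)).valMinAbs.natAbs < n then v ⟨_, h⟩ else 0

lemma evenPeriodicExt_periodic : Function.Periodic (evenPeriodicExt v) (2 * n : ℕ) := fun x => by
  simp only [evenPeriodicExt, Int.cast_add, Int.cast_natCast, ZMod.natCast_self, add_zero]

lemma evenPeriodicExt_neg (x : ℤ) : evenPeriodicExt v (-x) = evenPeriodicExt v x := by
  simp only [evenPeriodicExt, Int.cast_neg, ZMod.natAbs_valMinAbs_neg]

lemma evenPeriodicExt_natCast (k : Fin n) : evenPeriodicExt v k = v k := by
  have hk : ((k : ℕ) : ZMod (2 * n)).valMinAbs = (k : ℕ) :=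
    ZMod.valMinAbs_natCast_of_le_half (by omega)
  simp [evenPeriodicExt, hk]

lemma evenPeriodicExt_self : evenPeriodicExt v n = 0 := by
  have hn : (n : ZMod (2 * n)).valMinAbs = n := ZMod.valMinAbs_natCast_of_le_half (by omega)
  simp [evenPeriodicExt, hn]

lemma evenPeriodicExt_of_natAbs_eq {x : ℤ} {k : ℕ} (hk : k < n) (hx : x.natAbs = k) :
    evenPeriodicExt v x = v ⟨k, hk⟩ := by
  rcases Int.natAbs_eq_iff.1 hx with rfl | rfl
  · exact evenPeriodicExt_natCast v ⟨k, hk⟩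
  · rw [evenPeriodicExt_neg]
    exact evenPeriodicExt_natCast v ⟨k, hk⟩

end EvenPeriodicExtension

section ToeplitzPlusHankel

variable {n : ℕ}

lemma thMat_apply (v : Fin n → ℝ) (p q : Fin n) :
    thMat v p q = evenPeriodicExt v (p - q) + evenPeriodicExt v (p + q + 1) := by
  have hp := p.isLt
  have hq := q.isLt
  rw [thMat, of_apply]
  congr 1
  · rw [evenPeriodicExt_of_natAbs_eq]
    simp only [Nat.dist]
    omega
  · split_ifs with h_lt h_eq
    · rw [evenPeriodicExt_of_natAbs_eq]
      omega
    · have h_cast : (p + q + 1 : ℤ) = n := mod_cast h_eq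
      rw [h_cast, evenPeriodicExt_self]
    · rw [← (evenPeriodicExt_periodic v).sub_eq, evenPeriodicExt_of_natAbs_eq]
      omega

lemma thMat_mulVec_eq_convolution (v : Fin n → ℝ) {f : ℤ → ℝ}
    (hf : Function.Periodic f (2 * n : ℕ)) (hf_reflect : ∀ x, f (-1 - x) = f x) (p : Fin n) :
    (thMat v *ᵥ fun q => f q) p =
      ∑ x ∈ Finset.range (2 * n), evenPeriodicExt v x * f (p - x) := by
  have hv := evenPeriodicExt_periodic v
  calc (thMat v *ᵥ fun q => f q) p
      = ∑ q ∈ Finset.range n, (evenPeriodicExt v (p - q) * f q +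
          evenPeriodicExt v (p - (-1 - q)) * f (-1 - q)) := by
        rw [← Fin.sum_univ_eq_sum_range (fun q : ℕ => evenPeriodicExt v (p - q) * f q +
          evenPeriodicExt v (p - (-1 - q)) * f (-1 - q))]
        simp only [mulVec, dotProduct]
        refine Finset.sum_congr rfl fun q _ => ?_
        have h_reflect : (p - (-1 - q) : ℤ) = p + q + 1 := by ring
        rw [thMat_apply, hf_reflect, add_mul, h_reflect]
    _ = ∑ y ∈ Finset.range (2 * n), evenPeriodicExt v (p - y) * f y :=
        (sum_range_two_mul_of_periodic (g := fun y => evenPeriodicExt v (p - y) * f y)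
          ((hv.const_sub _).mul hf)).symm
    _ = ∑ x ∈ Finset.range (2 * n), evenPeriodicExt v x * f (p - x) := by
        simpa using sum_range_sub_of_periodic (g := fun x => evenPeriodicExt v x * f (p - x))
          (hv.mul (hf.const_sub _)) p

lemma thMat_mulVec_apply [NeZero n] (v : Fin n → ℝ) {f : ℤ → ℝ}
    (hf : Function.Periodic f (2 * n : ℕ)) (hf_reflect : ∀ x, f (-1 - x) = f x) (p : Fin n) :
    (thMat v *ᵥ fun q => f q) p = ∑ k : Fin n, v k * (f (p - k) + f (p + k)) - v 0 * f p := by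
  rw [thMat_mulVec_eq_convolution v hf hf_reflect, eq_sub_iff_add_eq']
  have h := add_sum_range_two_mul_of_periodic (g := fun x => evenPeriodicExt v x * f (p - x))
    ((evenPeriodicExt_periodic v).mul (hf.const_sub _))
  rw [← Fin.sum_univ_eq_sum_range (fun k : ℕ => evenPeriodicExt v k * f (p - k) +
    evenPeriodicExt v (-k) * f (p - -k))] at h
  have h_zero : evenPeriodicExt v 0 = v 0 := by simpa using evenPeriodicExt_natCast v 0
  simpa only [h_zero, evenPeriodicExt_neg, evenPeriodicExt_natCast, evenPeriodicExt_self, sub_zero,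
    zero_mul, add_zero, sub_neg_eq_add, ← mul_add] using h

end ToeplitzPlusHankel

section DCT

variable {n : ℕ}

/-- The `j`-th row of the DCT matrix, continued to arbitrary integer column indices. -/
def dctRow (n j : ℕ) (x : ℤ) : ℝ :=
  √((2 - if j = 0 then 1 else 0) / n) * Real.cos (j * (2 * x + 1) * Real.pi / (2 * n))

lemma dctMatrix_apply (i j : Fin n) : dctMatrix n i j = dctRow n i j := by
  simp [dctMatrix, dctRow]

lemma dctMatrix_row (j : Fin n) : dctMatrix n j = fun i : Fin n => dctRow n j i :=
  funext (dctMatrix_apply j)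

lemma dctRow_neg_one_sub (n j : ℕ) (x : ℤ) : dctRow n j (-1 - x) = dctRow n j x := by
  rw [dctRow, dctRow, ← Real.cos_neg]
  push_cast
  ring_nf

lemma dctRow_periodic [NeZero n] (j : ℕ) : Function.Periodic (dctRow n j) (2 * n : ℕ) := fun x => by
  rw [dctRow, dctRow, ← Real.cos_add_nat_mul_two_pi (j * (2 * x + 1) * Real.pi / (2 * n)) j]
  congr 2
  push_cast
  field [NeZero.ne (n : ℝ)]

lemma dctRow_sub_add_dctRow_add (n j : ℕ) (x k : ℤ) :
    dctRow n j (x - k) + dctRow n j (x + k) =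
      2 * Real.cos (j * k * Real.pi / n) * dctRow n j x := by
  rw [dctRow, dctRow, dctRow, ← mul_add, Real.cos_add_cos, ← Real.cos_neg (j * k * Real.pi / n)]
  push_cast
  ring_nf

lemma dctRow_zero_pos (j : Fin n) : 0 < dctRow n j 0 := by
  have hn : (0 : ℝ) < n := mod_cast j.pos
  have hj : (j : ℝ) < n := mod_cast j.isLt
  have h_angle : j * (2 * (0 : ℤ) + 1) * Real.pi / (2 * n) < Real.pi / 2 := by
    rw [Int.cast_zero, mul_zero, zero_add, mul_one, div_lt_div_iff₀ (by positivity) two_pos]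
    nlinarith [Real.pi_pos]
  exact mul_pos (Real.sqrt_pos.2 (div_pos (by split_ifs <;> norm_num) hn))
    (Real.cos_pos_of_mem_Ioo
      ⟨(neg_lt_zero.2 Real.pi_div_two_pos).trans_le (by positivity), h_angle⟩)

lemma vecMul_upshift_apply (f : ℤ → ℝ) (k : Fin n) :
    ((fun i : Fin n => f i) ᵥ* upshift n) k = if (k : ℕ) = 0 then 0 else f (k - 1) := by
  simp only [vecMul, dotProduct, upshift, of_apply, mul_ite, mul_one, mul_zero]
  split_ifs with hk
  · simp [hk]
  · obtain ⟨m, hm⟩ := Nat.exists_eq_succ_of_ne_zero hk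
    rw [Finset.sum_eq_single ⟨m, by omega⟩]
    · simp [hm]
    · intro i _ hi
      rw [if_neg fun h => hi (Fin.ext (by simpa [hm] using h))]
    · simp

lemma dctMatrix_mul_one_add_upshift_apply (j k : Fin n) :
    (dctMatrix n * (1 + upshift n)) j k =
      (if (k : ℕ) = 0 then 1 else 2 * Real.cos (j * k * Real.pi / n)) * dctRow n j 0 := by
  rw [Matrix.mul_add, Matrix.mul_one, Matrix.add_apply, mul_apply_eq_vecMul, dctMatrix_row,
    vecMul_upshift_apply]
  split_ifs with hk
  · simp [hk]
  · have h_prod := dctRow_sub_add_dctRow_add n j 0 k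
    have h_reflect : (-1 - (0 - k) : ℤ) = k - 1 := by ring
    rw [← dctRow_neg_one_sub n j (0 - k), h_reflect, zero_add, Int.cast_natCast] at h_prod
    rw [← h_prod, add_comm]

lemma Wdiag_inv (n : ℕ) : (Wdiag n)⁻¹ = diagonal fun j : Fin n => (dctRow n j 0)⁻¹ := by
  have h_ne (j : Fin n) : dctRow n j 0 ≠ 0 := (dctRow_zero_pos j).ne'
  refine inv_eq_right_inv ?_
  simp [Wdiag, dctMatrix_apply, h_ne]

lemma transformM_apply (j k : Fin n) :
    transformM n j k = if (k : ℕ) = 0 then 1 else 2 * Real.cos (j * k * Real.pi / n) := by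
  rw [transformM, Wdiag_inv, Matrix.mul_assoc, diagonal_mul, dctMatrix_mul_one_add_upshift_apply,
    mul_comm, mul_inv_cancel_right₀ (dctRow_zero_pos j).ne']

lemma transformM_mul_dctRow (j k : Fin n) (x : ℤ) :
    transformM n j k * dctRow n j x =
      dctRow n j (x - k) + dctRow n j (x + k) - if (k : ℕ) = 0 then dctRow n j x else 0 := by
  rw [transformM_apply]
  split_ifs with hk
  · simp [hk]
  · rw [dctRow_sub_add_dctRow_add, Int.cast_natCast, sub_zero]

lemma thMat_mulVec_dctMatrix (v : Fin n → ℝ) (j : Fin n) :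
    thMat v *ᵥ dctMatrix n j = (transformM n *ᵥ v) j • dctMatrix n j := by
  ext p
  have : NeZero n := .of_pos p.pos
  rw [dctMatrix_row, thMat_mulVec_apply v (dctRow_periodic j) (dctRow_neg_one_sub n j)]
  calc ∑ k : Fin n, v k * (dctRow n j (p - k) + dctRow n j (p + k)) - v 0 * dctRow n j p
      = ∑ k : Fin n, v k * (dctRow n j (p - k) + dctRow n j (p + k) -
          if (k : ℕ) = 0 then dctRow n j p else 0) := by
        simp [mul_sub, Finset.sum_sub_distrib]
    _ = (transformM n *ᵥ v) j * dctRow n j p := by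
        simp_rw [← transformM_mul_dctRow, mulVec, dotProduct, Finset.sum_mul]
        exact Finset.sum_congr rfl fun k _ => by ring

lemma sum_cos_odd_mul_of_not_dvd {m : ℤ} (hm : ¬ (2 * n : ℤ) ∣ m) :
    ∑ q : Fin n, Real.cos (m * (2 * q + 1) * Real.pi / (2 * n)) = 0 := by
  rcases eq_or_ne n 0 with rfl | hn
  · simp
  have h := Polynomial.Chebyshev.sumZeroes_T_of_not_dvd hm
  have h_scale : Real.pi / n ≠ 0 := div_ne_zero Real.pi_ne_zero (mod_cast hn)
  rw [Polynomial.Chebyshev.sumZeroes, mul_eq_zero_iff_left h_scale, ← Fin.sum_univ_eq_sum_range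
    fun q => (Polynomial.Chebyshev.T ℝ m).eval (Real.cos ((2 * q + 1) / (2 * n) * Real.pi))] at h
  rw [← h]
  refine Finset.sum_congr rfl fun q _ => ?_
  rw [Polynomial.Chebyshev.T_real_cos]
  ring_nf

lemma sum_cos_odd_mul_of_abs_lt {m : ℤ} (hm : |m| < 2 * n) :
    ∑ q : Fin n, Real.cos (m * (2 * q + 1) * Real.pi / (2 * n)) = if m = 0 then (n : ℝ) else 0 := by
  split_ifs with h
  · simp [h]
  · exact sum_cos_odd_mul_of_not_dvd fun hdvd => h (Int.eq_zero_of_abs_lt_dvd hdvd hm)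

lemma sum_cos_mul_cos_odd_mul (i j : Fin n) :
    ∑ q : Fin n, Real.cos (i * (2 * q + 1) * Real.pi / (2 * n)) *
        Real.cos (j * (2 * q + 1) * Real.pi / (2 * n)) =
      if i = j then (if (i : ℕ) = 0 then (n : ℝ) else n / 2) else 0 := by
  have product_to_sum (q : Fin n) :
      Real.cos (i * (2 * q + 1) * Real.pi / (2 * n)) *
          Real.cos (j * (2 * q + 1) * Real.pi / (2 * n)) =
        (Real.cos ((i - j : ℤ) * (2 * q + 1) * Real.pi / (2 * n)) +
          Real.cos ((i + j : ℤ) * (2 * q + 1) * Real.pi / (2 * n))) / 2 := by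
    rw [eq_div_iff two_ne_zero, mul_comm, ← mul_assoc, Real.two_mul_cos_mul_cos]
    push_cast
    ring_nf
  have h_sub : |(i - j : ℤ)| < 2 * n := by rw [abs_lt]; omega
  have h_add : |(i + j : ℤ)| < 2 * n := by rw [abs_lt]; omega
  simp_rw [product_to_sum, ← Finset.sum_div, Finset.sum_add_distrib,
    sum_cos_odd_mul_of_abs_lt h_sub, sum_cos_odd_mul_of_abs_lt h_add, sub_eq_zero, Nat.cast_inj,
    Fin.val_inj]
  split_ifs <;> first | omega | ring

lemma dctMatrix_mul_transpose (n : ℕ) : dctMatrix n * (dctMatrix n)ᵀ = 1 := by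
  ext i j
  have hn : (0 : ℝ) < n := mod_cast i.pos
  simp only [mul_apply, transpose_apply, dctMatrix, of_apply]
  rw [Finset.sum_congr rfl fun q _ => mul_mul_mul_comm _ _ _ _, ← Finset.mul_sum,
    sum_cos_mul_cos_odd_mul]
  obtain rfl | hij := eq_or_ne i j
  · rw [Real.mul_self_sqrt (div_nonneg (by split_ifs <;> norm_num) hn.le), if_pos rfl, one_apply_eq]
    split_ifs <;> field [hn.ne']
  · rw [if_neg hij, mul_zero, one_apply_ne hij]

lemma dctMatrix_mul_thMat_mul_transpose (v : Fin n → ℝ) :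
    dctMatrix n * thMat v * (dctMatrix n)ᵀ = diagonal (transformM n *ᵥ v) := by
  have h_eigen : thMat v * (dctMatrix n)ᵀ = (dctMatrix n)ᵀ * diagonal (transformM n *ᵥ v) := by
    ext p j
    rw [mul_diagonal, transpose_apply, mul_comm]
    exact congrFun (thMat_mulVec_dctMatrix v j) p
  rw [Matrix.mul_assoc, h_eigen, ← Matrix.mul_assoc, dctMatrix_mul_transpose, Matrix.one_mul]

end DCT

section Blocks

lemma kronecker_one_mul_mul_kronecker_one_apply {R l m n o r s : Type*} [NonAssocSemiring R]
    [Fintype m] [Fintype n] [Fintype r] [Fintype s] [DecidableEq r] [DecidableEq s]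
    (B : Matrix l m R) (X : Matrix (m × r) (n × s) R) (D : Matrix n o R)
    (p : l) (a : r) (q : o) (b : s) :
    (B ⊗ₖ (1 : Matrix r r R) * X * (D ⊗ₖ (1 : Matrix s s R))) (p, a) (q, b) =
      (B * X.submatrix (·, a) (·, b) * D) p q := by
  simp [mul_apply, Fintype.sum_prod_type, one_apply]

variable {n1 n2 n3 : ℕ} (A : Fin n3 → Matrix (Fin n1) (Fin n2) ℝ) (a : Fin n1) (b : Fin n2)

lemma tmat_submatrix : (tmat A).submatrix (·, a) (·, b) = thMat fun k => A k a b := by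
  ext p q
  simp only [submatrix_apply, tmat, thMat, hankelPart, of_apply, Matrix.add_apply]
  split_ifs <;> rfl

lemma tSlice_apply (p : Fin n3) : tSlice A p a b = (transformM n3 *ᵥ fun k => A k a b) p := by
  simp [tSlice, mulVec, dotProduct, Matrix.sum_apply]

end Blocks

/-- `(C_{n3} ⊗ I_{n1}) · mat(A) · (C_{n3}ᵀ ⊗ I_{n2})` is the block-diagonal matrix
whose `p`-th diagonal block is the `p`-th transformed slice `Ã^{(p)}` of `A`. -/
theorem tmat_block_diagonalized {n1 n2 n3 : ℕ}
    (A : Fin n3 → Matrix (Fin n1) (Fin n2) ℝ) :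
    (dctMatrix n3 ⊗ₖ (1 : Matrix (Fin n1) (Fin n1) ℝ)) * tmat A *
        ((dctMatrix n3)ᵀ ⊗ₖ (1 : Matrix (Fin n2) (Fin n2) ℝ)) =
      Matrix.of fun pi qj =>
        if pi.1 = qj.1 then tSlice A pi.1 pi.2 qj.2 else 0 := by
  ext ⟨p, a⟩ ⟨q, b⟩
  rw [kronecker_one_mul_mul_kronecker_one_apply, tmat_submatrix, dctMatrix_mul_thMat_mul_transpose,
    diagonal_apply, of_apply, tSlice_apply]

end
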